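/- Let 1 ≤ p ≤ ∞, let α be a multi-index on ℝⁿ, and let s > |α| be real. Then there exists a constant C > 0 such that ‖∂^α φ‖_p ≤ C ‖J_{−s} φ‖_p for all φ ∈ 𝒮(ℝⁿ). -/

import Mathlib

open MeasureTheory Complex
open scoped FourierTransform ENNReal SchwartzMap

/-- The Bessel potential `J_z f = 𝓕⁻¹((1+|ξ|²)^(-z/2) · 𝓕 f)` of a function on `ℝⁿ`. -/
noncomputable def besselPotential (n : ℕ) (z : ℂ)
    (f : EuclideanSpace ℝ (Fin n) → ℂ) : EuclideanSpace ℝ (Fin n) → ℂ :=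
  𝓕⁻ (fun ξ => ((1 : ℂ) + (‖ξ‖ : ℂ) ^ 2) ^ (-z / 2) * 𝓕 f ξ)

/-- The partial derivative in the `j`-th coordinate direction. -/
noncomputable def pderivFun (n : ℕ) (j : Fin n)
    (f : EuclideanSpace ℝ (Fin n) → ℂ) : EuclideanSpace ℝ (Fin n) → ℂ :=
  fun x => fderiv ℝ f x (EuclideanSpace.single j (1 : ℝ))

/-- The iterated partial derivative `∂^α` associated to a multi-index `α`. -/
noncomputable def multiDeriv (n : ℕ) (α : Fin n → ℕ)
    (f : EuclideanSpace ℝ (Fin n) → ℂ) : EuclideanSpace ℝ (Fin n) → ℂ :=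
  (List.finRange n).foldr (fun j g => (pderivFun n j)^[α j] g) f

/-- Minkowski's inequality for convolution with a finite measure. -/
theorem eLpNorm_le_measure_univ_mul_of_le_lintegral_sub {E F G : Type*} [NormedAddCommGroup E]
    [MeasurableSpace E] [BorelSpace E] [SecondCountableTopology E]
    [NormedAddCommGroup F] [NormedAddCommGroup G]
    (μ : Measure E) [SFinite μ] [μ.IsAddRightInvariant] (ν : Measure E) [IsFiniteMeasure ν]
    {f : E → F} {g : E → G} (hf : Continuous f)
    (hg : ∀ x, ‖g x‖ₑ ≤ ∫⁻ y, ‖f (x - y)‖ₑ ∂ν) {p : ℝ≥0∞} (hp : 1 ≤ p) :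
    eLpNorm g p μ ≤ ν Set.univ * eLpNorm f p μ := by
  have htrans (y : E) : MeasurePreserving (fun x : E => x - y) μ μ := by
    simpa [sub_eq_add_neg] using measurePreserving_add_right μ (-y)
  have hmeas : Measurable fun q : E × E => ‖f (q.1 - q.2)‖ₑ :=
    (hf.comp (continuous_fst.sub continuous_snd)).enorm.measurable
  rcases eq_or_ne p ∞ with rfl | hpt
  · have hae : ∀ᵐ x ∂μ, ∀ᵐ y ∂ν, ‖f (x - y)‖ₑ ≤ eLpNorm f ∞ μ := by
      refine (Measure.ae_ae_comm (p := fun x y => ‖f (x - y)‖ₑ ≤ eLpNorm f ∞ μ)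
        (measurableSet_le hmeas measurable_const)).2 (ae_of_all _ fun y => ?_)
      have h := enorm_ae_le_eLpNormEssSup f μ
      rw [← eLpNorm_exponent_top] at h
      exact (htrans y).quasiMeasurePreserving.ae h
    rw [eLpNorm_exponent_top (f := g)]
    refine eLpNormEssSup_le_of_ae_enorm_bound ?_
    filter_upwards [hae] with x hx
    calc ‖g x‖ₑ ≤ ∫⁻ y, ‖f (x - y)‖ₑ ∂ν := hg x
      _ ≤ ∫⁻ _, eLpNorm f ∞ μ ∂ν := lintegral_mono_ae hx
      _ = _ := by rw [lintegral_const, mul_comm]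
  · have hp0 : p ≠ 0 := (zero_lt_one.trans_le hp).ne'
    set r := p.toReal with hr
    have hr1 : 1 ≤ r := by
      simpa using ENNReal.toReal_mono hpt hp
    have hr0 : 0 < r := zero_lt_one.trans_le hr1
    have hjensen (x : E) : (∫⁻ y, ‖f (x - y)‖ₑ ∂ν) ^ r ≤
        ν Set.univ ^ (r - 1) * ∫⁻ y, ‖f (x - y)‖ₑ ^ r ∂ν := by
      have h := eLpNorm'_le_eLpNorm'_mul_rpow_measure_univ (μ := ν) (f := fun y => f (x - y))
        zero_lt_one hr1
        (hf.comp (continuous_const.sub continuous_id)).aestronglyMeasurable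
      simp only [eLpNorm', ENNReal.rpow_one, div_one] at h
      refine (ENNReal.rpow_le_rpow h hr0.le).trans_eq ?_
      rw [ENNReal.mul_rpow_of_nonneg _ _ hr0.le, ← ENNReal.rpow_mul, ← ENNReal.rpow_mul, mul_comm]
      congr 2
      · field_simp
      · rw [one_div_mul_cancel hr0.ne', ENNReal.rpow_one]
    have hmass : ν Set.univ ^ (r - 1) * ν Set.univ = ν Set.univ ^ r := by
      conv_lhs => rw [← ENNReal.rpow_one (ν Set.univ), ← ENNReal.rpow_mul,
        ← ENNReal.rpow_add_of_nonneg _ _ (by simpa using hr1) zero_le_one]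
      simp
    have hint : ∫⁻ x, ‖g x‖ₑ ^ r ∂μ ≤ ν Set.univ ^ r * ∫⁻ x, ‖f x‖ₑ ^ r ∂μ :=
      calc ∫⁻ x, ‖g x‖ₑ ^ r ∂μ
          ≤ ∫⁻ x, ν Set.univ ^ (r - 1) * ∫⁻ y, ‖f (x - y)‖ₑ ^ r ∂ν ∂μ :=
            lintegral_mono fun x => (ENNReal.rpow_le_rpow (hg x) hr0.le).trans (hjensen x)
        _ = ν Set.univ ^ (r - 1) * ∫⁻ x, ∫⁻ y, ‖f (x - y)‖ₑ ^ r ∂ν ∂μ :=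
            lintegral_const_mul _ (hmeas.pow_const r).lintegral_prod_right'
        _ = ν Set.univ ^ (r - 1) * ∫⁻ y, ∫⁻ x, ‖f (x - y)‖ₑ ^ r ∂μ ∂ν := by
            rw [lintegral_lintegral_swap (hmeas.pow_const r).aemeasurable]
        _ = ν Set.univ ^ (r - 1) * ∫⁻ _, ∫⁻ x, ‖f x‖ₑ ^ r ∂μ ∂ν := by
            congr 1
            refine lintegral_congr fun y => ?_
            exact (htrans y).lintegral_comp (f := fun x => ‖f x‖ₑ ^ r)
              (hf.enorm.measurable.pow_const r)
        _ = ν Set.univ ^ r * ∫⁻ x, ‖f x‖ₑ ^ r ∂μ := by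
            rw [lintegral_const, ← hmass]; ring
    rw [eLpNorm_eq_lintegral_rpow_enorm_toReal hp0 hpt,
      eLpNorm_eq_lintegral_rpow_enorm_toReal hp0 hpt, ← hr]
    refine (ENNReal.rpow_le_rpow hint (by positivity)).trans_eq ?_
    rw [ENNReal.mul_rpow_of_nonneg _ _ (by positivity), ← ENNReal.rpow_mul,
      mul_one_div_cancel hr0.ne', ENNReal.rpow_one]

theorem norm_cexp_neg_mul_sq_norm {E : Type*} [NormedAddCommGroup E] (d : ℝ) (v : E) :
    ‖cexp (-d * ‖v‖ ^ 2)‖ = Real.exp (-d * ‖v‖ ^ 2) := by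
  rw [Complex.norm_exp]
  norm_cast

section FourierMultiplier

variable {E : Type*} [NormedAddCommGroup E] [InnerProductSpace ℝ E] [FiniteDimensional ℝ E]
  [MeasurableSpace E] [BorelSpace E]

/-- A Fourier multiplier that is a superposition of the characters `ξ ↦ 𝐞 (-⟪h ω, ξ⟫)` acts as
the corresponding superposition of translations by `h ω`. -/
theorem fourierInv_integral_fourierChar_mul {Ω : Type*} [MeasurableSpace Ω] {μ : Measure Ω}
    [SFinite μ] {k : Ω → ℂ} (hk : Integrable k μ) {h : Ω → E} (hh : Measurable h)
    {F : E → ℂ} (hF : Integrable F) (x : E) :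
    𝓕⁻ (fun ξ => (∫ ω, k ω * (Real.fourierChar (-inner ℝ (h ω) ξ) : ℂ) ∂μ) * F ξ) x =
      ∫ ω, k ω * 𝓕⁻ F (x - h ω) ∂μ := by
  have hint : Integrable (fun q : E × Ω =>
      (Real.fourierChar (inner ℝ q.1 (x - h q.2)) : ℂ) * (F q.1 * k q.2)) (volume.prod μ) := by
    refine (hF.mul_prod hk).bdd_mul (c := 1) ?_ (ae_of_all _ fun q => (Circle.norm_coe _).le)
    have : Measurable fun q : E × Ω => inner ℝ q.1 (x - h q.2) := by fun_prop
    exact ((continuous_subtype_val.comp Real.continuous_fourierChar).measurable.comp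
      this).aestronglyMeasurable
  simp only [Real.fourierInv_eq, Circle.smul_def, smul_eq_mul]
  calc _ = ∫ ξ, ∫ ω, (Real.fourierChar (inner ℝ ξ (x - h ω)) : ℂ) * (F ξ * k ω) ∂μ := by
        refine integral_congr_ae (ae_of_all _ fun ξ => ?_)
        simp only
        rw [← integral_mul_const, ← integral_const_mul]
        refine integral_congr_ae (ae_of_all _ fun ω => ?_)
        simp only
        rw [inner_sub_right, sub_eq_add_neg, AddChar.map_add_eq_mul, Circle.coe_mul,
          real_inner_comm ξ (h ω)]
        ring
    _ = ∫ ω, (∫ ξ, (Real.fourierChar (inner ℝ ξ (x - h ω)) : ℂ) * (F ξ * k ω)) ∂μ :=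
        integral_integral_swap hint
    _ = _ := by
        refine integral_congr_ae (ae_of_all _ fun ω => ?_)
        simp only
        rw [← integral_const_mul]
        refine integral_congr_ae (ae_of_all _ fun ξ => ?_)
        simp only
        ring

/-- A Fourier multiplier that is an absolutely convergent superposition of characters is bounded
on `L^p`. -/
theorem eLpNorm_fourierInv_integral_fourierChar_mul_le {Ω : Type*} [MeasurableSpace Ω]
    {μ : Measure Ω} [SFinite μ] {k : Ω → ℂ} (hk : Integrable k μ) {h : Ω → E} (hh : Measurable h)
    {F : E → ℂ} (hF : Integrable F) {p : ℝ≥0∞} (hp : 1 ≤ p) :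
    eLpNorm (𝓕⁻ fun ξ => (∫ ω, k ω * (Real.fourierChar (-inner ℝ (h ω) ξ) : ℂ) ∂μ) * F ξ) p
      volume ≤ (∫⁻ ω, ‖k ω‖ₑ ∂μ) * eLpNorm (𝓕⁻ F) p volume := by
  have hcont : Continuous (𝓕⁻ F) := by
    rw [Real.fourierInv_eq_fourier_comp_neg]
    exact VectorFourier.fourierIntegral_continuous Real.continuous_fourierChar
      (L := innerₗ E) continuous_inner hF.comp_neg
  let ν : Measure E := (μ.withDensity fun ω => ‖k ω‖ₑ).map h
  have hν : ν Set.univ = ∫⁻ ω, ‖k ω‖ₑ ∂μ := by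
    rw [Measure.map_apply hh MeasurableSet.univ, Set.preimage_univ,
      withDensity_apply _ MeasurableSet.univ, Measure.restrict_univ]
  have : IsFiniteMeasure ν := ⟨by rw [hν]; exact hk.2⟩
  rw [← hν]
  refine eLpNorm_le_measure_univ_mul_of_le_lintegral_sub volume ν hcont (fun x => ?_) hp
  have hmeas : Measurable fun y => ‖𝓕⁻ F (x - y)‖ₑ :=
    (hcont.comp (continuous_const.sub continuous_id)).enorm.measurable
  rw [fourierInv_integral_fourierChar_mul hk hh hF, lintegral_map hmeas hh,
    lintegral_withDensity_eq_lintegral_mul₀ hk.1.enorm (g := fun ω => ‖𝓕⁻ F (x - h ω)‖ₑ)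
      (hmeas.comp hh).aemeasurable]
  refine (enorm_integral_le_lintegral_enorm _).trans_eq ?_
  simp [enorm_mul]

/-- For every `b > 0`, the function `ξ ↦ m ξ * exp (-b‖ξ‖²)` is the Fourier transform of an
integrable function. -/
def IsGaussianDampedFourier (m : E → ℂ) : Prop :=
  ∀ b : ℝ, 0 < b → ∃ K : E → ℂ, Integrable K ∧
    ∀ ξ, 𝓕 K ξ = m ξ * cexp (-b * ‖ξ‖ ^ 2)

theorem integrable_cexp_neg_mul_sq_norm {d : ℝ} (hd : 0 < d) :
    Integrable fun v : E => cexp (-d * ‖v‖ ^ 2) := by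
  simpa using GaussianFourier.integrable_cexp_neg_mul_sq_norm_add (V := E) (b := d)
    (by simpa using hd) 0 0

theorem integrable_norm_mul_norm_cexp_neg_mul_sq_norm {d : ℝ} (hd : 0 < d) :
    Integrable fun v : E => ‖v‖ * ‖cexp (-d * ‖v‖ ^ 2)‖ := by
  refine (((integrable_cexp_neg_mul_sq_norm (E := E) (half_pos hd)).norm).const_mul
    (1 / 2 + 1 / d)).mono' (Continuous.aestronglyMeasurable (by fun_prop))
    (ae_of_all _ fun v => ?_)
  rw [norm_mul, norm_norm, norm_norm, norm_cexp_neg_mul_sq_norm, norm_cexp_neg_mul_sq_norm]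
  have hsplit : Real.exp (-d * ‖v‖ ^ 2) =
      Real.exp (-(d / 2 * ‖v‖ ^ 2)) * Real.exp (-(d / 2) * ‖v‖ ^ 2) := by
    rw [← Real.exp_add]; ring_nf
  rw [hsplit, ← mul_assoc]
  refine mul_le_mul_of_nonneg_right ?_ (Real.exp_pos _).le
  rw [Real.exp_neg, ← div_eq_mul_inv, div_le_iff₀ (Real.exp_pos _)]
  have hexp := Real.add_one_le_exp (d / 2 * ‖v‖ ^ 2)
  calc ‖v‖ ≤ (1 / 2 + 1 / d) * (d / 2 * ‖v‖ ^ 2 + 1) := by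
        have h1 : (1 / 2 + 1 / d) * (d / 2 * ‖v‖ ^ 2 + 1) =
          1 / 2 + 1 / d + d / 4 * ‖v‖ ^ 2 + ‖v‖ ^ 2 / 2 := by field_simp; ring
        have h2 : 0 ≤ 1 / d := by positivity
        have h3 : 0 ≤ d / 4 * ‖v‖ ^ 2 := by positivity
        rw [h1]
        nlinarith [sq_nonneg (‖v‖ - 1)]
    _ ≤ _ := by gcongr

theorem fourier_const_mul (c : ℂ) (f : E → ℂ) (ξ : E) :
    𝓕 (fun v => c * f v) ξ = c * 𝓕 f ξ := by
  simp only [Real.fourier_eq, Circle.smul_def, smul_eq_mul]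
  rw [← integral_const_mul]
  congr 1 with v
  ring

theorem exists_fourier_gaussian_eq {b : ℝ} (hb : 0 < b) :
    ∃ c : ℂ, ∃ d : ℝ, 0 < d ∧ ∀ ξ : E,
      𝓕 (fun v : E => c * cexp (-d * ‖v‖ ^ 2)) ξ = cexp (-b * ‖ξ‖ ^ 2) := by
  have hd : 0 < Real.pi ^ 2 / b := by positivity
  have hpi : (Real.pi : ℂ) ≠ 0 := by exact_mod_cast Real.pi_ne_zero
  have hb' : (b : ℂ) ≠ 0 := by exact_mod_cast hb.ne'
  refine ⟨((Real.pi / ((Real.pi ^ 2 / b : ℝ) : ℂ)) ^ (Module.finrank ℝ E / 2 : ℂ))⁻¹,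
    Real.pi ^ 2 / b, hd, fun ξ => ?_⟩
  rw [fourier_const_mul, fourier_gaussian_innerProductSpace (by rwa [ofReal_re]),
    inv_mul_cancel_left₀]
  · congr 1
    push_cast
    field_simp
  · rw [Complex.cpow_def_of_ne_zero]
    · exact Complex.exp_ne_zero _
    · push_cast
      positivity

theorem IsGaussianDampedFourier.one : IsGaussianDampedFourier (fun _ : E => (1 : ℂ)) := by
  intro b hb
  obtain ⟨c, d, hd, h⟩ := exists_fourier_gaussian_eq (E := E) hb
  exact ⟨_, (integrable_cexp_neg_mul_sq_norm hd).const_mul c, fun ξ => by rw [h, one_mul]⟩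

theorem IsGaussianDampedFourier.const_mul {m : E → ℂ} (hm : IsGaussianDampedFourier m) (c : ℂ) :
    IsGaussianDampedFourier fun ξ => c * m ξ := by
  intro b hb
  obtain ⟨K, hK, h⟩ := hm b hb
  exact ⟨_, hK.const_mul c, fun ξ => by rw [fourier_const_mul, h, mul_assoc]⟩

theorem IsGaussianDampedFourier.inner_const (a : E) :
    IsGaussianDampedFourier fun ξ : E => ((inner ℝ ξ a : ℝ) : ℂ) := by
  intro b hb
  obtain ⟨c, d, hd, h⟩ := exists_fourier_gaussian_eq (E := E) hb
  set f : E → ℂ := fun v => c * cexp (-d * ‖v‖ ^ 2) with hf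
  have hfi : Integrable f := (integrable_cexp_neg_mul_sq_norm hd).const_mul c
  have hvf : Integrable fun v => ‖v‖ * ‖f v‖ := by
    refine ((integrable_norm_mul_norm_cexp_neg_mul_sq_norm (E := E) hd).const_mul ‖c‖).congr
      (ae_of_all _ fun v => ?_)
    simp only [hf, norm_mul]
    ring
  have hLi : Integrable (VectorFourier.fourierSMulRight (innerSL ℝ) f) := by
    refine (hvf.const_mul (2 * Real.pi * ‖innerSL ℝ (E := E)‖)).mono'
      hfi.1.fourierSMulRight (ae_of_all _ fun v => ?_)
    refine (VectorFourier.norm_fourierSMulRight_le _ f v).trans_eq (by ring)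
  have hb' : (b : ℂ) ≠ 0 := by exact_mod_cast hb.ne'
  refine ⟨fun v => (-(2 * b : ℂ))⁻¹ * VectorFourier.fourierSMulRight (innerSL ℝ) f v a,
    (hLi.apply_continuousLinearMap a).const_mul _, fun ξ => ?_⟩
  rw [fourier_const_mul, ← Real.fourier_continuousLinearMap_apply hLi,
    ← Real.fderiv_fourier hfi hvf, funext h]
  have hderiv : HasFDerivAt (fun ξ : E => cexp (-b * ‖ξ‖ ^ 2))
      (cexp (-b * ‖ξ‖ ^ 2) • ((-b : ℂ) • (Complex.ofRealCLM.comp (2 • innerSL ℝ ξ)))) ξ := by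
    have h1 := (Complex.ofRealCLM.hasFDerivAt.comp ξ
      (hasStrictFDerivAt_norm_sq ξ).hasFDerivAt).const_mul (-b : ℂ)
    simpa using h1.cexp
  rw [hderiv.fderiv]
  simp
  field_simp

theorem IsGaussianDampedFourier.mul {m₁ m₂ : E → ℂ} (h₁ : IsGaussianDampedFourier m₁)
    (h₂ : IsGaussianDampedFourier m₂) : IsGaussianDampedFourier fun ξ => m₁ ξ * m₂ ξ := by
  intro b hb
  obtain ⟨K₁, hK₁, hF₁⟩ := h₁ (b / 2) (half_pos hb)
  obtain ⟨K₂, hK₂, hF₂⟩ := h₂ (b / 2) (half_pos hb)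
  refine ⟨_, hK₁.integrable_convolution (ContinuousLinearMap.mul ℂ ℂ) hK₂, fun ξ => ?_⟩
  rw [Real.fourier_mul_convolution_eq hK₁ hK₂, hF₁, hF₂, mul_mul_mul_comm, ← Complex.exp_add]
  congr 2
  push_cast
  ring

theorem IsGaussianDampedFourier.pow {m : E → ℂ} (hm : IsGaussianDampedFourier m) (k : ℕ) :
    IsGaussianDampedFourier fun ξ => m ξ ^ k := by
  induction k with
  | zero => simpa using IsGaussianDampedFourier.one
  | succ k ih => simpa only [pow_succ] using ih.mul hm

theorem IsGaussianDampedFourier.prod {ι : Type*} (s : Finset ι) {m : ι → E → ℂ}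
    (hm : ∀ i ∈ s, IsGaussianDampedFourier (m i)) :
    IsGaussianDampedFourier fun ξ => ∏ i ∈ s, m i ξ := by
  classical
  induction s using Finset.induction_on with
  | empty => simpa using IsGaussianDampedFourier.one
  | insert i s hi ih =>
    simp only [Finset.prod_insert hi]
    exact (hm i (Finset.mem_insert_self i s)).mul
      (ih fun j hj => hm j (Finset.mem_insert_of_mem hj))

/-- A homogeneous symbol `m` of degree `N`, damped by `(1 + ‖ξ‖²) ^ (-s / 2)` with `s > N`, is an
absolutely convergent superposition of characters. -/
theorem IsGaussianDampedFourier.exists_integral_fourierChar_eq {m : E → ℂ}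
    (hm : IsGaussianDampedFourier m) {N : ℕ}
    (hhom : ∀ (r : ℝ) (ξ : E), m (r • ξ) = (r : ℂ) ^ N * m ξ) {s : ℝ} (hs : N < s) :
    ∃ k : ℝ × E → ℂ, Integrable k ((volume.restrict (Set.Ioi 0)).prod volume) ∧
      ∀ ξ : E, ∫ q, k q * (Real.fourierChar (-inner ℝ (√q.1 • q.2) ξ) : ℂ)
          ∂((volume.restrict (Set.Ioi 0)).prod volume) =
        m ξ * (((1 + ‖ξ‖ ^ 2) ^ (-s / 2) : ℝ) : ℂ) := by
  obtain ⟨D, hD, hDF⟩ := hm 1 one_pos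
  have hN : (0 : ℝ) ≤ N := N.cast_nonneg
  have hs0 : 0 < s / 2 := by linarith
  have hΓ : Real.Gamma (s / 2) ≠ 0 := (Real.Gamma_pos_of_pos hs0).ne'
  let w : ℝ → ℝ := fun t => (Real.Gamma (s / 2))⁻¹ * (Real.exp (-t) * t ^ ((s - N) / 2 - 1))
  have hw : Integrable (fun t => (w t : ℂ)) (volume.restrict (Set.Ioi 0)) :=
    ((Real.GammaIntegral_convergent (by linarith : 0 < (s - N) / 2)).const_mul _).ofReal
  have hk : Integrable (fun q : ℝ × E => (w q.1 : ℂ) * D q.2)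
      ((volume.restrict (Set.Ioi 0)).prod volume) := hw.mul_prod hD
  refine ⟨fun q => w q.1 * D q.2, hk, fun ξ => ?_⟩
  have hint : Integrable (fun q : ℝ × E =>
      (w q.1 : ℂ) * D q.2 * (Real.fourierChar (-inner ℝ (√q.1 • q.2) ξ) : ℂ))
      ((volume.restrict (Set.Ioi 0)).prod volume) := by
    refine hk.mul_bdd (c := 1) ?_ (ae_of_all _ fun q => (Circle.norm_coe _).le)
    have : Continuous fun q : ℝ × E => -inner ℝ (√q.1 • q.2) ξ := by fun_prop
    exact (continuous_subtype_val.comp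
      (Real.continuous_fourierChar.comp this)).aestronglyMeasurable
  have hinner (t : ℝ) : ∫ y, (w t : ℂ) * D y * (Real.fourierChar (-inner ℝ (√t • y) ξ) : ℂ) =
      w t * 𝓕 D (√t • ξ) := by
    simp only [Real.fourier_eq, Circle.smul_def, smul_eq_mul]
    rw [← integral_const_mul]
    congr 1 with y
    rw [real_inner_smul_left, real_inner_smul_right]
    ring
  have hpt : ∀ t ∈ Set.Ioi (0 : ℝ), (w t : ℂ) * 𝓕 D (√t • ξ) =
      m ξ * (((Real.Gamma (s / 2))⁻¹ *
        (t ^ (s / 2 - 1) * Real.exp (-((1 + ‖ξ‖ ^ 2) * t))) : ℝ) : ℂ) := by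
    intro t (ht : 0 < t)
    have hpow : t ^ (s / 2 - 1) = t ^ ((s - N) / 2 - 1) * √t ^ N := by
      rw [Real.sqrt_eq_rpow, ← Real.rpow_natCast, ← Real.rpow_mul ht.le, ← Real.rpow_add ht]
      congr 1
      ring
    have hexp : Real.exp (-((1 + ‖ξ‖ ^ 2) * t)) =
        Real.exp (-t) * Real.exp (-(‖√t • ξ‖ ^ 2)) := by
      rw [← Real.exp_add, norm_smul, mul_pow, Real.norm_eq_abs, sq_abs, Real.sq_sqrt ht.le]
      congr 1
      ring
    rw [hDF, hhom, hpow, hexp]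
    simp only [w]
    push_cast
    ring_nf
  rw [integral_prod _ hint]
  simp only [hinner]
  rw [setIntegral_congr_fun measurableSet_Ioi hpt, integral_const_mul, integral_complex_ofReal,
    integral_const_mul, Real.integral_rpow_mul_exp_neg_mul_Ioi hs0 (by positivity),
    mul_left_comm, inv_mul_cancel₀ hΓ, mul_one, one_div,
    Real.inv_rpow (by positivity), ← Real.rpow_neg (by positivity), neg_div]

end FourierMultiplier

section Symbol

variable {n : ℕ}

/-- The symbol `∏ j, (2πi ξ_j) ^ α_j` of the differential operator `∂^α`. -/
noncomputable def multiDerivSymbol (α : Fin n → ℕ) (ξ : EuclideanSpace ℝ (Fin n)) : ℂ :=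
  ∏ j, (2 * Real.pi * I * ξ j) ^ α j

theorem isGaussianDampedFourier_multiDerivSymbol (α : Fin n → ℕ) :
    IsGaussianDampedFourier (multiDerivSymbol α) := by
  refine IsGaussianDampedFourier.prod _ fun j _ => IsGaussianDampedFourier.pow ?_ _
  simpa [EuclideanSpace.inner_single_right] using (IsGaussianDampedFourier.inner_const
    (EuclideanSpace.single j (1 : ℝ))).const_mul (2 * Real.pi * I)

theorem multiDerivSymbol_smul (α : Fin n → ℕ) (r : ℝ) (ξ : EuclideanSpace ℝ (Fin n)) :
    multiDerivSymbol α (r • ξ) = (r : ℂ) ^ (∑ j, α j) * multiDerivSymbol α ξ := by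
  rw [multiDerivSymbol, multiDerivSymbol, ← Finset.prod_pow_eq_pow_sum, ← Finset.prod_mul_distrib]
  refine Finset.prod_congr rfl fun j _ => ?_
  rw [← mul_pow]
  congr 1
  simp
  ring

theorem exists_schwartzMap_pderivFun_iterate_eq (j : Fin n) (k : ℕ)
    (φ : 𝓢(EuclideanSpace ℝ (Fin n), ℂ)) :
    ∃ ψ : 𝓢(EuclideanSpace ℝ (Fin n), ℂ), (pderivFun n j)^[k] φ = ψ ∧
      ∀ ξ, 𝓕 ψ ξ = (2 * Real.pi * I * ξ j) ^ k * 𝓕 φ ξ := by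
  induction k with
  | zero => exact ⟨φ, rfl, fun ξ => by simp⟩
  | succ k ih =>
    obtain ⟨ψ, hψ, hF⟩ := ih
    refine ⟨LineDeriv.lineDerivOp (EuclideanSpace.single j (1 : ℝ)) ψ, ?_, fun ξ => ?_⟩
    · rw [Function.iterate_succ_apply', hψ]
      rfl
    · rw [SchwartzMap.fourier_lineDerivOp_eq, smul_apply,
        SchwartzMap.smulLeftCLM_apply_apply (by fun_prop), hF]
      simp only [EuclideanSpace.inner_single_right, conj_trivial, one_mul, real_smul, smul_eq_mul]
      ring

theorem exists_schwartzMap_multiDeriv_eq (α : Fin n → ℕ)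
    (φ : 𝓢(EuclideanSpace ℝ (Fin n), ℂ)) :
    ∃ ψ : 𝓢(EuclideanSpace ℝ (Fin n), ℂ), multiDeriv n α φ = ψ ∧
      ∀ ξ, 𝓕 ψ ξ = multiDerivSymbol α ξ * 𝓕 φ ξ := by
  have key (l : List (Fin n)) : ∃ ψ : 𝓢(EuclideanSpace ℝ (Fin n), ℂ),
      l.foldr (fun j g => (pderivFun n j)^[α j] g) φ = ψ ∧
      ∀ ξ, 𝓕 ψ ξ = (l.map fun j => (2 * Real.pi * I * ξ j : ℂ) ^ α j).prod * 𝓕 φ ξ := by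
    induction l with
    | nil => exact ⟨φ, rfl, fun ξ => by simp⟩
    | cons j l ih =>
      obtain ⟨ψ, hψ, hF⟩ := ih
      obtain ⟨χ, hχ, hG⟩ := exists_schwartzMap_pderivFun_iterate_eq j (α j) ψ
      refine ⟨χ, by rw [List.foldr_cons, hψ, hχ], fun ξ => ?_⟩
      rw [hG, hF, List.map_cons, List.prod_cons]
      ring
  obtain ⟨ψ, hψ, hF⟩ := key (List.finRange n)
  exact ⟨ψ, hψ, fun ξ => by rw [hF, multiDerivSymbol, Fin.prod_univ_def]⟩

end Symbol

/-- For `1 ≤ p ≤ ∞`, a multi-index `α` and real `s > |α|`, one has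
`‖∂^α φ‖_p ≤ C ‖J_{-s} φ‖_p` for all Schwartz `φ`. -/
theorem multiDeriv_le_besselPotential (n : ℕ) (p : ℝ≥0∞) (hp : 1 ≤ p)
    (α : Fin n → ℕ) (s : ℝ) (hs : (∑ j, α j : ℝ) < s) :
    ∃ C : ℝ, 0 < C ∧ ∀ φ : 𝓢(EuclideanSpace ℝ (Fin n), ℂ),
      eLpNorm (multiDeriv n α ⇑φ) p volume ≤
        ENNReal.ofReal C * eLpNorm (besselPotential n (-(s : ℂ)) ⇑φ) p volume := by
  have hs' : ((∑ j, α j : ℕ) : ℝ) < s := by exact_mod_cast hs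
  obtain ⟨k, hk, hkm⟩ := (isGaussianDampedFourier_multiDerivSymbol α).exists_integral_fourierChar_eq
    (multiDerivSymbol_smul α) hs'
  set μ : Measure (ℝ × EuclideanSpace ℝ (Fin n)) := (volume.restrict (Set.Ioi 0)).prod volume
  have hh : Measurable fun q : ℝ × EuclideanSpace ℝ (Fin n) => √q.1 • q.2 := by fun_prop
  refine ⟨(∫⁻ q, ‖k q‖ₑ ∂μ).toReal + 1, by positivity, fun φ => ?_⟩
  obtain ⟨ψ, hψ, hψF⟩ := exists_schwartzMap_multiDeriv_eq α φ
  set F : EuclideanSpace ℝ (Fin n) → ℂ :=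
    fun ξ => ((1 : ℂ) + (‖ξ‖ : ℂ) ^ 2) ^ (-(-(s : ℂ)) / 2) * 𝓕 (φ : _ → ℂ) ξ with hF_def
  have hF (ξ : EuclideanSpace ℝ (Fin n)) :
      F ξ = (((1 + ‖ξ‖ ^ 2) ^ (s / 2) : ℝ) : ℂ) * 𝓕 φ ξ := by
    rw [hF_def, Complex.ofReal_cpow (by positivity), SchwartzMap.fourier_coe]
    push_cast
    rw [neg_neg]
  have hFint : Integrable F := by
    refine (SchwartzMap.smulLeftCLM ℂ
      (fun ξ : EuclideanSpace ℝ (Fin n) => (1 + ‖ξ‖ ^ 2) ^ (s / 2)) (𝓕 φ)).integrable.congr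
      (ae_of_all _ fun ξ => ?_)
    rw [SchwartzMap.smulLeftCLM_apply_apply (by fun_prop), hF, Complex.real_smul]
  have hmul : multiDeriv n α φ = 𝓕⁻ fun ξ =>
      (∫ q, k q * (Real.fourierChar (-inner ℝ (√q.1 • q.2) ξ) : ℂ) ∂μ) * F ξ := by
    rw [hψ, ← FourierTransform.fourierInv_fourier_eq (F := 𝓢(EuclideanSpace ℝ (Fin n), ℂ)) ψ,
      SchwartzMap.fourierInv_coe]
    congr 1 with ξ
    have hpos : (0 : ℝ) < 1 + ‖ξ‖ ^ 2 := by positivity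
    rw [hψF, hkm, hF, mul_assoc, ← mul_assoc (Complex.ofReal _), ← Complex.ofReal_mul,
      ← Real.rpow_add hpos, neg_div, neg_add_cancel, Real.rpow_zero, Complex.ofReal_one, one_mul]
  rw [hmul]
  refine (eLpNorm_fourierInv_integral_fourierChar_mul_le hk hh hFint hp).trans ?_
  refine mul_le_mul_left ?_ _
  calc ∫⁻ q, ‖k q‖ₑ ∂μ = ENNReal.ofReal (∫⁻ q, ‖k q‖ₑ ∂μ).toReal :=
        (ENNReal.ofReal_toReal hk.2.ne).symm
    _ ≤ _ := ENNReal.ofReal_le_ofReal (by linarith)
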